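/- Suppose P_n ≥ 2·K_n. Then: (a) p_s = K_n²/P_n ± O(K_n⁴/P_n²), i.e., |p_s − K_n²/P_n| = O(K_n⁴/P_n²); (b) p_s ≤ K_n²/(P_n − K_n); (c) p_s = o(1) if and only if K_n²/P_n = o(1); (d) if p_s = o(1) (equivalently K_n²/P_n = o(1)), then |K_n²/P_n − p_s| = O(p_s²). -/

import Mathlib

open MeasureTheory Filter Asymptotics
open scoped ENNReal

noncomputable section

/-- Key rings: `K`-element subsets of a key pool of size `P`. -/
abbrev KeyRing (P K : ℕ) : Type := {s : Finset (Fin P) // s.card = K}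

instance (P K : ℕ) : MeasurableSpace (KeyRing P K) := ⊤

/-- The uniform probability measure on key rings. -/
def uniformKeyMeasure (P K : ℕ) : Measure (KeyRing P K) :=
  (Fintype.card (KeyRing P K) : ℝ≥0∞)⁻¹ • (Measure.count : Measure (KeyRing P K))

/-- The Bernoulli measure with parameter `p` on `Bool`. -/
def bern (p : ℝ) : Measure Bool :=
  ENNReal.ofReal p • Measure.dirac true + ENNReal.ofReal (1 - p) • Measure.dirac false

/-- Sample space underlying `𝔾_on(n, K, P, p)`: independent key rings for the `n`
nodes together with independent on/off channel states for each pair of nodes. -/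
abbrev GonSpace (n K P : ℕ) : Type :=
  (Fin n → KeyRing P K) × (Sym2 (Fin n) → Bool)

/-- The probability measure of the model `𝔾_on(n, K, P, p)`: the key rings of the
`n` nodes are independent and uniform, and the channels are independent
Bernoulli(`p`) variables, independent of the key rings. -/
def gonMeasure (n K P : ℕ) (p : ℝ) : Measure (GonSpace n K P) :=
  (Measure.pi fun _ : Fin n => uniformKeyMeasure P K).prod
    (Measure.pi fun _ : Sym2 (Fin n) => bern p)

/-- The random graph `𝔾_on`: an edge is present iff the key rings intersect and the
channel between the two nodes is on. -/
def gonGraph {n K P : ℕ} (ω : GonSpace n K P) : SimpleGraph (Fin n) where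
  Adj i j := i ≠ j ∧ ((ω.1 i).1 ∩ (ω.1 j).1).Nonempty ∧ ω.2 s(i, j) = true
  symm := by
    refine ⟨?_⟩
    rintro i j ⟨h1, h2, h3⟩
    exact ⟨h1.symm, by rwa [Finset.inter_comm], by rwa [Sym2.eq_swap]⟩
  loopless := ⟨fun i h => h.1 rfl⟩

/-- The random key graph `G(n, K, P)`: an edge is present iff the key rings intersect. -/
def rkgGraph {n K P : ℕ} (ω : Fin n → KeyRing P K) : SimpleGraph (Fin n) where
  Adj i j := i ≠ j ∧ ((ω i).1 ∩ (ω j).1).Nonempty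
  symm := by
    refine ⟨?_⟩
    rintro i j ⟨h1, h2⟩
    exact ⟨h1.symm, by rwa [Finset.inter_comm]⟩
  loopless := ⟨fun i h => h.1 rfl⟩

/-- The probability measure of the random key graph model. -/
def rkgMeasure (n K P : ℕ) : Measure (Fin n → KeyRing P K) :=
  Measure.pi fun _ : Fin n => uniformKeyMeasure P K

/-- Degree of a vertex. -/
def gDeg {V : Type*} (G : SimpleGraph V) (v : V) : ℕ := Nat.card {w // G.Adj v w}

/-- Minimum vertex degree. -/
def minDeg {V : Type*} (G : SimpleGraph V) : ℕ := sInf (Set.range (gDeg G))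

/-- A graph is `k`-connected if it remains connected after the removal of any
`k - 1` of its vertices. -/
def KConnected {V : Type*} (G : SimpleGraph V) (k : ℕ) : Prop :=
  ∀ S : Finset V, S.card ≤ k - 1 → (G.induce ((S : Set V)ᶜ)).Connected

/-- Vertex connectivity: the least number of vertices whose deletion disconnects
the graph. -/
def vertexConn {V : Type*} (G : SimpleGraph V) : ℕ :=
  sInf {m | ∃ S : Finset V, S.card = m ∧ ¬ (G.induce ((S : Set V)ᶜ)).Connected}

/-- `p_s`: the probability that two key rings share at least one key. -/
def psf (K P : ℕ) : ℝ :=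
  if 2 * K ≤ P then 1 - (Nat.choose (P - K) K : ℝ) / (Nat.choose P K : ℝ) else 1

/-- `p_e = p · p_s`: the probability of an edge in `𝔾_on`. -/
def pef (K P : ℕ) (p : ℝ) : ℝ := p * psf K P

/-- The event `D_{x,ℓ}` that the node with index `x` has degree exactly `ℓ`. -/
def degEvent (n K P : ℕ) (x ℓ : ℕ) : Set (GonSpace n K P) :=
  {ω | ∃ hx : x < n, gDeg (gonGraph ω) ⟨x, hx⟩ = ℓ}

/-- The event `E_{xy}` that the edge between the nodes with indices `x`, `y` is present. -/
def edgeEvent (n K P : ℕ) (x y : ℕ) : Set (GonSpace n K P) :=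
  {ω | ∃ (hx : x < n) (hy : y < n), (gonGraph ω).Adj ⟨x, hx⟩ ⟨y, hy⟩}

/-- The event that the key rings of nodes `x` and `y` share exactly `u` keys. -/
def interCardEvent (n K P : ℕ) (x y u : ℕ) : Set (GonSpace n K P) :=
  {ω | ∃ (hx : x < n) (hy : y < n), ((ω.1 ⟨x, hx⟩).1 ∩ (ω.1 ⟨y, hy⟩).1).card = u}

/-- The event `K_{xy}` that the key rings of nodes `x` and `y` share at least one key. -/
def keyShareEvent (n K P : ℕ) (x y : ℕ) : Set (GonSpace n K P) :=
  {ω | ∃ (hx : x < n) (hy : y < n), ((ω.1 ⟨x, hx⟩).1 ∩ (ω.1 ⟨y, hy⟩).1).Nonempty}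

/-- `r_n = min(⌊P/K⌋, ⌊n/2⌋)`. -/
def rn (n K P : ℕ) : ℕ := min (P / K) (n / 2)

/-- The threshold array `J`. -/
def Jarr (n K P : ℕ) (ε lam mu : ℝ) (i : ℕ) : ℕ :=
  if i ≤ rn n K P then max ⌊(1 + ε) * (K : ℝ)⌋₊ ⌊lam * (K : ℝ) * (i : ℝ)⌋₊
  else ⌊mu * (P : ℝ)⌋₊

/-- The event `𝓔(J)`: some set `T` of at least two nodes has a union of key rings of
size at most `J_{|T|}`. -/
def EJ (n K P : ℕ) (ε lam mu : ℝ) : Set (GonSpace n K P) :=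
  {ω | ∃ T : Finset (Fin n), 2 ≤ T.card ∧
    (T.biUnion fun i => (ω.1 i).1).card ≤ Jarr n K P ε lam mu T.card}

/-!
Write `x = K ^ 2 / P`. The `K`-subsets meeting a fixed `K`-subset are covered by the `K` families of
those containing a given element of it, so `p_s ≤ x`. Conversely, drawing the keys one at a time,
each misses the fixed subset with probability at most `1 - K / P`, so
`1 - p_s ≤ (1 - K / P) ^ K ≤ 1 / (1 + x)`, that is, `x - p_s ≤ x * p_s`. The asymptotics follow
from these two bounds; for instance, `p_s → 0` turns the second one into `x - p_s = o(x)`.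
-/

section ChooseRatio

lemma choose_succ_le_choose_sub_add (P K j : ℕ) :
    P.choose (j + 1) ≤ (P - K).choose (j + 1) + K * (P - 1).choose j := by
  induction K with
  | zero => simp
  | succ K ih =>
    have pascal : (P - K).choose (j + 1) ≤ (P - (K + 1)).choose (j + 1) + (P - 1).choose j := by
      rcases h : P - K with _ | m
      · simp
      · rw [Nat.choose_succ_succ', show P - (K + 1) = m by omega, add_comm]
        gcongr
        omega
    linarith

lemma choose_mul_pow_le_choose_mul_pow {m n : ℕ} (hmn : m ≤ n) (j : ℕ) :
    m.choose j * n ^ j ≤ n.choose j * m ^ j := by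
  induction j with
  | zero => simp
  | succ j ih =>
    have draw : (m - j) * n ≤ (n - j) * m := by
      rw [Nat.sub_mul, Nat.sub_mul, mul_comm n m]
      gcongr
    refine Nat.le_of_mul_le_mul_right ?_ j.succ_pos
    calc m.choose (j + 1) * n ^ (j + 1) * (j + 1)
        = (m.choose j * n ^ j) * ((m - j) * n) := by
          linear_combination n ^ (j + 1) * Nat.choose_succ_right_eq m j
      _ ≤ (n.choose j * m ^ j) * ((n - j) * m) := Nat.mul_le_mul ih draw
      _ = n.choose (j + 1) * m ^ (j + 1) * (j + 1) := by
          linear_combination -(m ^ (j + 1) * Nat.choose_succ_right_eq n j)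

variable {𝕜 : Type*} [Field 𝕜] [LinearOrder 𝕜] [IsStrictOrderedRing 𝕜]

lemma one_sub_choose_sub_div_choose_le {P j : ℕ} (hj : j ≤ P) (K : ℕ) :
    1 - ((P - K).choose j : 𝕜) / P.choose j ≤ j * K / P := by
  rcases j with _ | j
  · simp
  obtain ⟨N, rfl⟩ : ∃ N, P = N + 1 := ⟨P - 1, by omega⟩
  have hchoose : (0 : 𝕜) < (N + 1).choose (j + 1) := mod_cast Nat.choose_pos hj
  have union_bound : ((N + 1).choose (j + 1) : 𝕜) ≤
      (N + 1 - K).choose (j + 1) + K * N.choose j :=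
    mod_cast choose_succ_le_choose_sub_add (N + 1) K j
  have absorption : ((N + 1 : ℕ) : 𝕜) * N.choose j = (N + 1).choose (j + 1) * (j + 1 : ℕ) :=
    mod_cast Nat.add_one_mul_choose_eq N j
  rw [one_sub_div hchoose.ne', div_le_div_iff₀ hchoose (by positivity)]
  calc (((N + 1).choose (j + 1) : 𝕜) - (N + 1 - K).choose (j + 1)) * (N + 1 : ℕ)
      ≤ K * N.choose j * (N + 1 : ℕ) := by gcongr; linarith
    _ = (j + 1 : ℕ) * K * (N + 1).choose (j + 1) := by linear_combination K * absorption

lemma choose_div_choose_le_div_pow {m n : ℕ} (hmn : m ≤ n) (j : ℕ) :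
    (m.choose j : 𝕜) / n.choose j ≤ ((m : 𝕜) / n) ^ j := by
  rcases lt_or_ge n j with hnj | hjn
  · rw [Nat.choose_eq_zero_of_lt hnj, Nat.cast_zero, div_zero]
    positivity
  have hchoose : (0 : 𝕜) < n.choose j := mod_cast Nat.choose_pos hjn
  have hpow : (0 : 𝕜) < (n : 𝕜) ^ j := mod_cast Nat.pow_pos_iff.2 (by omega)
  rw [div_pow, div_le_div_iff₀ hchoose hpow, mul_comm ((m : 𝕜) ^ j)]
  exact_mod_cast choose_mul_pow_le_choose_mul_pow hmn j

lemma one_sub_pow_mul_one_add_mul_le_one {y : 𝕜} (hy₀ : 0 ≤ y) (hy₁ : y ≤ 1) (j : ℕ) :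
    (1 - y) ^ j * (1 + j * y) ≤ 1 :=
  have := sub_nonneg.2 hy₁
  calc (1 - y) ^ j * (1 + j * y)
      ≤ (1 - y) ^ j * (1 + y) ^ j := by
        gcongr
        exact one_add_mul_le_pow (by linarith) j
    _ = ((1 - y) * (1 + y)) ^ j := (mul_pow _ _ _).symm
    _ ≤ 1 := pow_le_one₀ (by positivity) (by nlinarith)

lemma choose_sub_div_choose_mul_le_one {P K : ℕ} (hKP : K ≤ P) (j : ℕ) :
    ((P - K).choose j : 𝕜) / P.choose j * (1 + j * K / P) ≤ 1 := by
  rcases P.eq_zero_or_pos with rfl | hP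
  · simpa using div_self_le_one ((Nat.choose 0 j : ℕ) : 𝕜)
  have hP_cast : (0 : 𝕜) < P := mod_cast hP
  calc ((P - K).choose j : 𝕜) / P.choose j * (1 + j * K / P)
      ≤ (((P - K : ℕ) : 𝕜) / P) ^ j * (1 + j * K / P) := by
        gcongr
        exact choose_div_choose_le_div_pow (P.sub_le K) j
    _ = (1 - (K : 𝕜) / P) ^ j * (1 + j * (K / P)) := by
        rw [Nat.cast_sub hKP, sub_div, div_self hP_cast.ne', mul_div_assoc]
    _ ≤ 1 := one_sub_pow_mul_one_add_mul_le_one (by positivity)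
        (div_le_one_of_le₀ (mod_cast hKP) hP_cast.le) j

end ChooseRatio

section PointwiseBounds

variable {K P : ℕ}

lemma psf_eq_one_sub_div (hKP : K ≤ P) :
    psf K P = 1 - ((P - K).choose K : ℝ) / P.choose K := by
  unfold psf
  split_ifs with h
  · rfl
  · rw [Nat.choose_eq_zero_of_lt (by omega : P - K < K), Nat.cast_zero, zero_div, sub_zero]

lemma psf_nonneg (K P : ℕ) : 0 ≤ psf K P := by
  unfold psf
  split_ifs
  · exact sub_nonneg.2 <| div_le_one_of_le₀
      (mod_cast Nat.choose_le_choose K (P.sub_le K)) (Nat.cast_nonneg _)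
  · exact zero_le_one

lemma psf_le_sq_div (hKP : K ≤ P) : psf K P ≤ (K : ℝ) ^ 2 / P := by
  rw [psf_eq_one_sub_div hKP, sq]
  exact one_sub_choose_sub_div_choose_le hKP K

lemma sq_div_sub_psf_le_mul (hKP : K ≤ P) :
    (K : ℝ) ^ 2 / P - psf K P ≤ (K : ℝ) ^ 2 / P * psf K P := by
  have h := choose_sub_div_choose_mul_le_one (𝕜 := ℝ) hKP K
  rw [psf_eq_one_sub_div hKP, sq]
  linarith

lemma sq_div_le_sq_div_sub (hKP : 2 * K ≤ P) : (K : ℝ) ^ 2 / P ≤ (K : ℝ) ^ 2 / (P - K) := by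
  rcases K.eq_zero_or_pos with rfl | hK
  · simp
  have hKP_cast : (K : ℝ) < P := mod_cast (by omega : K < P)
  exact div_le_div_of_nonneg_left (by positivity) (sub_pos.2 hKP_cast) (sub_le_self _ K.cast_nonneg)

end PointwiseBounds

section Asymptotics

variable {ι : Type*} {l : Filter ι} {K P : ι → ℕ}

lemma psf_isBigO_sq_div (hKP : ∀ n, K n ≤ P n) :
    (fun n => psf (K n) (P n)) =O[l] fun n => (K n : ℝ) ^ 2 / P n :=
  isBigO_of_le l fun n => by
    rw [Real.norm_of_nonneg (psf_nonneg (K n) (P n)), Real.norm_of_nonneg (by positivity)]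
    exact psf_le_sq_div (hKP n)

lemma psf_sub_sq_div_isBigO_mul (hKP : ∀ n, K n ≤ P n) :
    (fun n => psf (K n) (P n) - (K n : ℝ) ^ 2 / P n) =O[l]
      fun n => (K n : ℝ) ^ 2 / P n * psf (K n) (P n) :=
  isBigO_of_le l fun n => by
    have hp := psf_nonneg (K n) (P n)
    rw [norm_sub_rev, Real.norm_of_nonneg (sub_nonneg.2 (psf_le_sq_div (hKP n))),
      Real.norm_of_nonneg (by positivity)]
    exact sq_div_sub_psf_le_mul (hKP n)

lemma psf_isEquivalent_sq_div (hKP : ∀ n, K n ≤ P n)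
    (hp : Tendsto (fun n => psf (K n) (P n)) l (nhds 0)) :
    (fun n => psf (K n) (P n)) ~[l] fun n => (K n : ℝ) ^ 2 / P n := by
  have mul_isLittleO : (fun n => (K n : ℝ) ^ 2 / P n * psf (K n) (P n)) =o[l]
      fun n => (K n : ℝ) ^ 2 / P n := by
    simpa only [mul_one] using (isBigO_refl _ l).mul_isLittleO ((isLittleO_one_iff ℝ).2 hp)
  exact (psf_sub_sq_div_isBigO_mul hKP).trans_isLittleO mul_isLittleO

end Asymptotics

theorem psf_estimates_general {ι : Type*} {l : Filter ι} (K P : ι → ℕ) (hKP : ∀ n, K n ≤ P n) :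
    ((fun n => psf (K n) (P n) - (K n : ℝ) ^ 2 / P n) =O[l]
      fun n => (K n : ℝ) ^ 4 / (P n : ℝ) ^ 2) ∧
    (∀ n, psf (K n) (P n) ≤ (K n : ℝ) ^ 2 / P n) ∧
    (Tendsto (fun n => psf (K n) (P n)) l (nhds 0) ↔
      Tendsto (fun n => (K n : ℝ) ^ 2 / P n) l (nhds 0)) ∧
    (Tendsto (fun n => psf (K n) (P n)) l (nhds 0) →
      (fun n => (K n : ℝ) ^ 2 / P n - psf (K n) (P n)) =O[l] fun n => psf (K n) (P n) ^ 2) := by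
  have p_isBigO_x := psf_isBigO_sq_div (l := l) hKP
  have sub_isBigO_mul := psf_sub_sq_div_isBigO_mul (l := l) hKP
  refine ⟨?_, fun n => psf_le_sq_div (hKP n),
    ⟨fun hp => (psf_isEquivalent_sq_div hKP hp).isBigO_symm.trans_tendsto hp,
      p_isBigO_x.trans_tendsto⟩, fun hp => ?_⟩
  · refine (sub_isBigO_mul.trans ((isBigO_refl _ l).mul p_isBigO_x)).congr_right fun n => ?_
    ring
  · have x_isBigO_p := (psf_isEquivalent_sq_div hKP hp).isBigO_symm
    refine (sub_isBigO_mul.symm.trans (x_isBigO_p.mul (isBigO_refl _ l))).congr_right fun n => ?_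
    exact (sq _).symm

/-- estimates for `p_s` in terms of `K²/P`. -/
theorem psf_estimates
    (K P : ℕ → ℕ) (hKP : ∀ n, 2 * K n ≤ P n) :
    -- (a)
    ((fun n : ℕ => psf (K n) (P n) - (K n : ℝ) ^ 2 / (P n : ℝ)) =O[atTop]
      fun n : ℕ => (K n : ℝ) ^ 4 / (P n : ℝ) ^ 2) ∧
    -- (b)
    (∀ n : ℕ, psf (K n) (P n) ≤ (K n : ℝ) ^ 2 / ((P n : ℝ) - (K n : ℝ))) ∧
    -- (c)
    (Tendsto (fun n : ℕ => psf (K n) (P n)) atTop (nhds 0) ↔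
      Tendsto (fun n : ℕ => (K n : ℝ) ^ 2 / (P n : ℝ)) atTop (nhds 0)) ∧
    -- (d)
    (Tendsto (fun n : ℕ => psf (K n) (P n)) atTop (nhds 0) →
      (fun n : ℕ => (K n : ℝ) ^ 2 / (P n : ℝ) - psf (K n) (P n)) =O[atTop]
        fun n : ℕ => psf (K n) (P n) ^ 2) := by
  obtain ⟨ha, hb, hcd⟩ := psf_estimates_general K P fun n => by linarith [hKP n]
  exact ⟨ha, fun n => (hb n).trans (sq_div_le_sq_div_sub (hKP n)), hcd⟩
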